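/- Let B, B', B'' be real constants with B > 0, B' < 0, B'' > 0, BB'' − B'² > 0, and let μ > √(4B''). Define ψ(ρ,u,y) = Ψ*(y) − (u − μρ²/2)²/(2B) + μ²ρ²/(4B') + log ρ − (BB''/(BB''−B'²))·(y + (μ + (2B'/B)(u − μρ²/2))/√(8B''))², where Ψ* is the logarithmic potential of the semicircle law of radius √2. Then ψ attains its unique maximum on (0,∞) × ℝ × ℝ at ρ* = √(−2B')/μ, u* = B'/μ, y* = −(1/√2)(μ/√(4B'') + √(4B'')/μ), and ψ(ρ*,u*,y*) = −log√(4B'') + (1/2)log(−2B') − 1/2 − (1/2)log 2. -/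

import Mathlib

open MeasureTheory

/-- The semicircle probability measure of radius `√2`. -/
noncomputable def sigmaSc : Measure ℝ :=
  (volume.restrict (Set.Icc (-Real.sqrt 2) (Real.sqrt 2))).withDensity
    (fun t => ENNReal.ofReal ((1 / Real.pi) * Real.sqrt (2 - t ^ 2)))

/-- The logarithmic potential of the semicircle law. -/
noncomputable def PsiStar (x : ℝ) : ℝ := ∫ t, Real.log |x - t| ∂sigmaSc

/-- The SRC complexity function `ψ(ρ,u,y)`. -/
noncomputable def psiSRC (B B' B'' μ ρ u y : ℝ) : ℝ :=
  PsiStar y - (u - μ * ρ ^ 2 / 2) ^ 2 / (2 * B) + μ ^ 2 * ρ ^ 2 / (4 * B') +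
    Real.log ρ -
    (B * B'' / (B * B'' - B' ^ 2)) *
      (y + (μ + (2 * B' / B) * (u - μ * ρ ^ 2 / 2)) / Real.sqrt (8 * B'')) ^ 2

/-!
The map `z ↦ √2 Re z` pushes the weight `1 - Re z²` on the unit circle forward to the semicircle
law. Writing `√2 y = ζ + ζ⁻¹` with `1 ≤ ‖ζ‖` (Joukowski), the integrand factors,
`log |y - √2 Re z| = log ‖ζ‖ - (log 2) / 2 + log ‖1 - ζ⁻¹z‖ + log ‖1 - ζ⁻¹z⁻¹‖`, and the averages of
the last two terms against the weight are read off the Taylor coefficients of `log (1 - ζ⁻¹z)`. So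
`Ψ*(y) = log ‖ζ‖ + Re ζ⁻² / 2 - (log 2) / 2` for every `y`.

Completing the square in `u` decouples the variables: with `s = μ / √(4B'')`, the function `ψ` is
`(Ψ*(y) - (y + s / √2)²) + (log ρ + μ²ρ² / (4B'))` minus a square which vanishes at a single `u`.
At `√2 y = -(r + r⁻¹)` with `r ≥ 1`, the first bracket has `r`-derivative `(1 - r⁻²)(s - r)`, so its
maximum on `y ≤ -√2` is at `r = s`, which is where `μ ≥ √(4B'')` enters. It decreases in `y` on
`[-√2, √2]`, and for `y ≥ √2` the reflection `y ↦ -y` increases it.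
-/

open Real Filter Topology Metric Polynomial.Chebyshev

theorem circleAverage_comp_re (g : ℝ → ℝ) :
    circleAverage (fun z ↦ g z.re) 0 1 = π⁻¹ * ∫ x, g x ∂measureT := by
  have fold : ∫ θ in Set.Icc (-π) π, g (cos θ) = 2 * ∫ θ in Set.Ioc 0 π, g (cos θ) := by
    have h := integral_comp_abs (f := (Set.Iic π).indicator fun θ ↦ g (cos θ))
    have habs : (fun θ ↦ (Set.Iic π).indicator (fun θ ↦ g (cos θ)) |θ|) =
        (Set.Icc (-π) π).indicator fun θ ↦ g (cos θ) := by
      ext θ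
      simp [Set.indicator_apply, abs_le]
    rwa [habs, integral_indicator measurableSet_Icc, setIntegral_indicator measurableSet_Iic,
      Set.Ioi_inter_Iic] at h
  have shift : ∫ θ in 0..2 * π, g (cos (θ - π)) = ∫ θ in Set.Icc (-π) π, g (cos θ) := by
    rw [intervalIntegral.integral_comp_sub_right (fun θ ↦ g (cos θ)), zero_sub, two_mul,
      add_sub_cancel_right, intervalIntegral.integral_of_le (by linarith [pi_pos]),
      integral_Icc_eq_integral_Ioc]
  rw [circleAverage_eq_integral_add (-π)]
  simp only [circleMap, zero_add, Complex.ofReal_one, one_mul, Complex.exp_ofReal_mul_I_re,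
    ← sub_eq_add_neg, smul_eq_mul]
  rw [shift, fold, integral_measureT_eq_integral_cos, intervalIntegral.integral_of_le pi_pos.le]
  field_simp

theorem one_sub_re_sq_of_mem_sphere {z : ℂ} (hz : z ∈ sphere 0 1) :
    1 - (z ^ 2).re = 2 * (1 - z.re ^ 2) := by
  have h : z.re * z.re + z.im * z.im = 1 := by
    rw [← Complex.normSq_apply, Complex.normSq_eq_norm_sq, mem_sphere_zero_iff_norm.1 hz, one_pow]
  rw [sq, Complex.mul_re]
  linear_combination h

theorem integral_sigmaSc_eq_intervalIntegral (f : ℝ → ℝ) :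
    ∫ t, f t ∂sigmaSc = ∫ t in -√2..√2, π⁻¹ * √(2 - t ^ 2) * f t := by
  rw [sigmaSc, integral_withDensity_eq_integral_toReal_smul (by fun_prop) (by simp),
    integral_Icc_eq_integral_Ioc, ← intervalIntegral.integral_of_le (by simp)]
  congr! 3 with t
  rw [ENNReal.toReal_ofReal (by positivity), one_div]

theorem integral_sigmaSc (f : ℝ → ℝ) :
    ∫ t, f t ∂sigmaSc = circleAverage (fun z ↦ (1 - (z ^ 2).re) * f (√2 * z.re)) 0 1 := by
  have weight : Set.EqOn (fun z : ℂ ↦ (1 - (z ^ 2).re) * f (√2 * z.re))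
      (fun z ↦ 2 * (1 - z.re ^ 2) * f (√2 * z.re)) (sphere 0 |1|) := by
    rw [abs_one]
    intro z hz
    simp only [one_sub_re_sq_of_mem_sphere hz]
  have scale : ∫ t in -√2..√2, π⁻¹ * √(2 - t ^ 2) * f t =
      √2 * ∫ x in -1..1, π⁻¹ * √(2 - (√2 * x) ^ 2) * f (√2 * x) := by
    rw [intervalIntegral.integral_comp_mul_left (fun t ↦ π⁻¹ * √(2 - t ^ 2) * f t) (by positivity)]
    simp
  rw [circleAverage_congr_sphere weight,
    circleAverage_comp_re fun x ↦ 2 * (1 - x ^ 2) * f (√2 * x), integral_measureT,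
    integral_sigmaSc_eq_intervalIntegral, scale, ← intervalIntegral.integral_const_mul,
    ← intervalIntegral.integral_const_mul]
  refine intervalIntegral.integral_congr fun x _ ↦ ?_
  have hroot : √(2 - (√2 * x) ^ 2) = √2 * √(1 - x ^ 2) := by
    rw [← sqrt_mul zero_le_two, mul_pow, sq_sqrt zero_le_two]
    ring_nf
  simp only [hroot, sqrt_inv]
  linear_combination π⁻¹ * √(1 - x ^ 2) * f (√2 * x) * sq_sqrt (zero_le_two (α := ℝ)) -
    2 * π⁻¹ * f (√2 * x) * div_sqrt (x := 1 - x ^ 2)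

/-! ### Averages of `log ‖1 - wz‖` over the unit circle -/

theorem iteratedDeriv_log_one_sub_mul {n : ℕ} (hn : n ≠ 0) (w : ℂ) :
    iteratedDeriv n (fun z ↦ Complex.log (1 - w * z)) 0 = -((n - 1).factorial * w ^ n) := by
  obtain ⟨n, rfl⟩ := Nat.exists_eq_succ_of_ne_zero hn
  have h_deriv : deriv (fun z ↦ Complex.log (1 - w * z)) =ᶠ[𝓝 0]
      fun z ↦ -w * (-w * z + 1)⁻¹ := by
    have hmem : ∀ᶠ z in 𝓝 (0 : ℂ), 1 - w * z ∈ Complex.slitPlane :=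
      ContinuousAt.eventually_mem (by fun_prop) (by simp [Complex.isOpen_slitPlane.mem_nhds])
    filter_upwards [hmem] with z hz
    have h := (((hasDerivAt_id z).const_mul w).const_sub 1).clog hz
    simp only [id] at h
    rw [h.deriv]
    grind
  have hsign : (-1 : ℂ) ^ n * (-w) ^ n = w ^ n := by rw [← mul_pow, neg_one_mul, neg_neg]
  rw [iteratedDeriv_succ', h_deriv.iteratedDeriv_eq, iteratedDeriv_const_mul_field,
    iteratedDeriv_eq_iterate, iter_deriv_inv_linear]
  simp only [mul_zero, zero_add, one_zpow, mul_one, Nat.succ_eq_add_one, add_tsub_cancel_right]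
  linear_combination -w * n.factorial * hsign

theorem circleAverage_inv_pow_mul {f : ℂ → ℂ} (hf : DiffContOnCl ℂ f (ball 0 1)) (n : ℕ) :
    circleAverage (fun z ↦ z⁻¹ ^ n * f z) 0 1 = iteratedDeriv n f 0 / n.factorial := by
  have cauchy := hf.circleIntegral_one_div_sub_center_pow_smul one_pos n
  have integrand : (fun z : ℂ ↦ (z - 0)⁻¹ • (z⁻¹ ^ n * f z)) =
      fun z ↦ (1 / (z - 0) ^ (n + 1)) • f z := by
    ext z
    simp only [sub_zero, smul_eq_mul, one_div, pow_succ]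
    ring
  rw [circleAverage_eq_circleIntegral one_ne_zero, integrand, cauchy, smul_smul, smul_eq_mul]
  field_simp

theorem circleAverage_re_pow_mul_re {f : ℂ → ℂ} (hf : DiffContOnCl ℂ f (ball 0 1)) {n : ℕ}
    (hn : n ≠ 0) :
    circleAverage (fun z ↦ (z ^ n).re * (f z).re) 0 1 =
      (iteratedDeriv n f 0 / n.factorial).re / 2 := by
  have hcont : ContinuousOn f (sphere 0 1) :=
    hf.continuousOn_ball.mono sphere_subset_closedBall
  have h₁ : CircleIntegrable (fun z ↦ z ^ n * f z) 0 1 :=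
    ContinuousOn.circleIntegrable zero_le_one (by fun_prop)
  have h₂ : CircleIntegrable (fun z ↦ z⁻¹ ^ n * f z) 0 1 := by
    refine ContinuousOn.circleIntegrable zero_le_one (.mul (.pow (.inv₀ (by fun_prop) ?_) n) hcont)
    exact fun z hz ↦ ne_of_mem_sphere hz one_ne_zero
  have hpow : circleAverage (fun z ↦ z ^ n * f z) 0 1 = 0 := by
    rw [DiffContOnCl.circleAverage]
    · simp [hn]
    · rw [abs_one]
      exact (by fun_prop : Differentiable ℂ fun z : ℂ ↦ z ^ n).diffContOnCl.smul hf
  have hre : Set.EqOn (fun z ↦ (z ^ n).re * (f z).re)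
      (fun z ↦ (2 : ℝ)⁻¹ • (Complex.reCLM ∘ fun z ↦ z ^ n * f z + z⁻¹ ^ n * f z) z)
      (sphere 0 |1|) := by
    intro z hz
    have hinv : z⁻¹ ^ n = (starRingEnd ℂ) (z ^ n) := by
      rw [Complex.inv_eq_conj (by simpa using hz), map_pow]
    simp only [Function.comp, hinv, Complex.reCLM_apply, Complex.add_re, Complex.mul_re,
      Complex.conj_re, Complex.conj_im, smul_eq_mul]
    ring
  rw [circleAverage_congr_sphere hre, circleAverage_fun_smul,
    ContinuousLinearMap.circleAverage_comp_comm _ (h₁.fun_add h₂), circleAverage_fun_add h₁ h₂,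
    hpow, circleAverage_inv_pow_mul hf, zero_add, Complex.reCLM_apply, smul_eq_mul]
  ring

theorem circleAverage_re_pow_mul_log_norm_of_lt {w : ℂ} (hw : ‖w‖ < 1) {n : ℕ} (hn : n ≠ 0) :
    circleAverage (fun z ↦ (z ^ n).re * log ‖1 - w * z‖) 0 1 = -(w ^ n).re / (2 * n) := by
  have hdiff : DiffContOnCl ℂ (fun z ↦ Complex.log (1 - w * z)) (ball 0 1) := by
    refine DifferentiableOn.diffContOnCl fun z hz ↦ DifferentiableAt.differentiableWithinAt ?_
    rw [closure_ball _ one_ne_zero, mem_closedBall_zero_iff] at hz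
    have hwz : ‖-(w * z)‖ < 1 := by
      rw [norm_neg, norm_mul]
      exact mul_lt_one_of_nonneg_of_lt_one_left (norm_nonneg w) hw hz
    exact .clog (by fun_prop) (sub_eq_add_neg 1 (w * z) ▸ Complex.mem_slitPlane_of_norm_lt_one hwz)
  have coeff : -((n - 1).factorial * w ^ n) / (n.factorial : ℂ) =
      ((-(n : ℝ)⁻¹ : ℝ) : ℂ) * w ^ n := by
    rw [← Nat.mul_factorial_pred hn]
    have := Nat.cast_ne_zero (R := ℂ).2 (n - 1).factorial_ne_zero
    push_cast
    field_simp
  have h := circleAverage_re_pow_mul_re hdiff hn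
  simp only [Complex.log_re] at h
  rw [h, iteratedDeriv_log_one_sub_mul hn, coeff, Complex.re_ofReal_mul]
  field_simp

theorem norm_one_sub_le_two_mul {ξ : ℂ} (hξ : ‖ξ‖ ≤ 1) {r : ℝ} (hr : r ∈ Set.Icc 0 1) :
    ‖1 - ξ‖ ≤ 2 * ‖1 - r * ξ‖ := by
  have hrξ : ‖r * ξ‖ ≤ r := by
    rw [norm_mul, Complex.norm_real, norm_of_nonneg hr.1]
    exact mul_le_of_le_one_right hr.1 hξ
  have hgap : 1 - r ≤ ‖1 - r * ξ‖ := by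
    have := norm_sub_norm_le 1 (r * ξ)
    rw [norm_one] at this
    linarith
  calc ‖1 - ξ‖ = ‖(1 - r * ξ) - ((1 - r : ℝ) : ℂ) * ξ‖ := by push_cast; ring_nf
    _ ≤ ‖1 - r * ξ‖ + (1 - r) * 1 := by
      grw [norm_sub_le, norm_mul, hξ, Complex.norm_real, norm_of_nonneg (sub_nonneg.2 hr.2)]
    _ ≤ 2 * ‖1 - r * ξ‖ := by linarith

theorem abs_log_norm_one_sub_mul_le {ξ : ℂ} (hξ : ‖ξ‖ ≤ 1) (hξ₁ : ξ ≠ 1) {r : ℝ}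
    (hr : r ∈ Set.Icc 0 1) :
    |log ‖1 - r * ξ‖| ≤ log 2 + |log ‖1 - ξ‖| := by
  have hpos : 0 < ‖1 - ξ‖ := norm_pos_iff.2 (sub_ne_zero.2 hξ₁.symm)
  have hle := norm_one_sub_le_two_mul hξ hr
  have hrpos : 0 < ‖1 - r * ξ‖ := by linarith
  have hupper : ‖1 - r * ξ‖ ≤ 2 := by
    have : ‖r * ξ‖ ≤ 1 := by
      rw [norm_mul, Complex.norm_real, norm_of_nonneg hr.1]
      exact mul_le_one₀ hr.2 (norm_nonneg ξ) hξ
    grw [norm_sub_le, norm_one, this]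
    norm_num
  have h₁ := log_le_log hpos hle
  have h₂ := log_le_log hrpos hupper
  rw [log_mul two_ne_zero hrpos.ne'] at h₁
  rw [abs_le]
  constructor <;> linarith [abs_nonneg (log ‖1 - ξ‖), neg_abs_le (log ‖1 - ξ‖)]

theorem circleIntegrable_log_norm_one_sub_mul (w c : ℂ) (R : ℝ) :
    CircleIntegrable (fun z ↦ log ‖1 - w * z‖) c R :=
  MeromorphicOn.circleIntegrable_log_norm (f := fun z ↦ 1 - w * z) fun _ _ ↦ by fun_prop

theorem ae_mul_circleMap_ne_one (w : ℂ) : ∀ᵐ θ : ℝ, w * circleMap 0 1 θ ≠ 1 := by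
  have hnull :=
    (Set.countable_singleton w⁻¹).preimage_circleMap 0 one_ne_zero |>.measure_zero volume
  filter_upwards [measure_eq_zero_iff_ae_notMem.1 hnull] with θ hθ h
  exact hθ (eq_inv_of_mul_eq_one_right h)

theorem tendsto_circleAverage_mul_log_norm_one_sub {g : ℂ → ℝ} (hg : ContinuousOn g (sphere 0 1))
    {w : ℂ} (hw : ‖w‖ ≤ 1) :
    Tendsto (fun r : ℝ ↦ circleAverage (fun z ↦ g z * log ‖1 - r * (w * z)‖) 0 1) (𝓝[<] 1)
      (𝓝 (circleAverage (fun z ↦ g z * log ‖1 - w * z‖) 0 1)) := by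
  have hgc : Continuous fun θ ↦ g (circleMap 0 1 θ) :=
    hg.comp_continuous (continuous_circleMap 0 1) fun θ ↦ circleMap_mem_sphere 0 zero_le_one θ
  have hnorm (θ : ℝ) : ‖w * circleMap 0 1 θ‖ ≤ 1 := by simpa using hw
  refine Tendsto.const_smul (intervalIntegral.tendsto_integral_filter_of_dominated_convergence
    (fun θ ↦ |g (circleMap 0 1 θ)| * (log 2 + |log ‖1 - w * circleMap 0 1 θ‖|)) ?_ ?_ ?_ ?_) _
  · exact .of_forall fun r ↦ (hgc.measurable.mul (by fun_prop)).aestronglyMeasurable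
  · filter_upwards [Ioo_mem_nhdsLT zero_lt_one] with r hr
    filter_upwards [ae_mul_circleMap_ne_one w] with θ hθ _
    rw [norm_mul, norm_eq_abs, norm_eq_abs]
    gcongr
    exact abs_log_norm_one_sub_mul_le (hnorm θ) hθ ⟨hr.1.le, hr.2.le⟩
  · refine IntervalIntegrable.continuousOn_mul (.add (by simp) ?_) hgc.abs.continuousOn
    exact (circleIntegrable_log_norm_one_sub_mul w 0 1).abs
  · filter_upwards [ae_mul_circleMap_ne_one w] with θ hθ _
    have hne : ‖1 - ((1 : ℝ) : ℂ) * (w * circleMap 0 1 θ)‖ ≠ 0 := by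
      simpa [sub_eq_zero] using hθ.symm
    have hcont : ContinuousAt (fun r : ℝ ↦ log ‖1 - r * (w * circleMap 0 1 θ)‖) 1 :=
      .log (by fun_prop) hne
    simpa using! (hcont.tendsto.const_mul (g (circleMap 0 1 θ))).mono_left nhdsWithin_le_nhds

theorem circleAverage_re_pow_mul_log_norm {w : ℂ} (hw : ‖w‖ ≤ 1) {n : ℕ} (hn : n ≠ 0) :
    circleAverage (fun z ↦ (z ^ n).re * log ‖1 - w * z‖) 0 1 = -(w ^ n).re / (2 * n) := by
  have hlim := tendsto_circleAverage_mul_log_norm_one_sub (g := fun z ↦ (z ^ n).re)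
    (by fun_prop) hw
  have hvalue : (fun r : ℝ ↦ -((r * w) ^ n).re / (2 * n)) =ᶠ[𝓝[<] 1]
      fun r : ℝ ↦ circleAverage (fun z ↦ (z ^ n).re * log ‖1 - r * (w * z)‖) 0 1 := by
    filter_upwards [Ioo_mem_nhdsLT zero_lt_one] with r hr
    have hrw : ‖r * w‖ < 1 := by
      rw [norm_mul, Complex.norm_real, norm_of_nonneg hr.1.le]
      exact mul_lt_one_of_nonneg_of_lt_one_left hr.1.le hr.2 hw
    rw [← circleAverage_re_pow_mul_log_norm_of_lt hrw hn]
    simp only [mul_assoc]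
  have hcont : ContinuousAt (fun r : ℝ ↦ -((r * w) ^ n).re / (2 * n)) 1 := by fun_prop
  refine tendsto_nhds_unique hlim ?_
  simpa using (hcont.tendsto.mono_left nhdsWithin_le_nhds).congr' hvalue

theorem circleAverage_log_norm_one_sub_mul {w : ℂ} (hw : ‖w‖ ≤ 1) :
    circleAverage (fun z ↦ log ‖1 - w * z‖) 0 1 = 0 := by
  have hinv : Set.EqOn (fun z ↦ log ‖1 - w * z⁻¹‖) (log ‖· - w‖) (sphere 0 |1|) := by
    intro z hz
    have hz : ‖z‖ = 1 := by simpa using hz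
    have hz₀ : z ≠ 0 := norm_ne_zero_iff.1 (hz ▸ one_ne_zero)
    have : z - w = z * (1 - w * z⁻¹) := by field_simp
    simp only [this, norm_mul, hz, one_mul]
  rw [← circleAverage_zero_one_congr_inv, circleAverage_congr_sphere hinv,
    circleAverage_log_norm_sub_const_eq_posLog, posLog_eq_zero_iff]
  simpa using hw

theorem circleAverage_one_sub_re_sq_mul_log_norm {w : ℂ} (hw : ‖w‖ ≤ 1) :
    circleAverage (fun z ↦ (1 - (z ^ 2).re) * log ‖1 - w * z‖) 0 1 = (w ^ 2).re / 4 := by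
  have hint := circleIntegrable_log_norm_one_sub_mul w 0 1
  have hint₂ : CircleIntegrable (fun z ↦ (z ^ 2).re * log ‖1 - w * z‖) 0 1 :=
    hint.fun_continuousOn_mul (g := fun z ↦ (z ^ 2).re) (by fun_prop)
  simp only [sub_mul, one_mul]
  rw [circleAverage_fun_sub hint hint₂, circleAverage_log_norm_one_sub_mul hw,
    circleAverage_re_pow_mul_log_norm hw two_ne_zero]
  push_cast
  ring

/-! ### The logarithmic potential in Joukowski coordinates -/

theorem abs_sub_sqrt_two_mul_re {y : ℝ} {ζ z : ℂ} (hζ : ζ ≠ 0) (hy : √2 * y = ζ + ζ⁻¹)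
    (hz : ‖z‖ = 1) :
    |y - √2 * z.re| = ‖ζ‖ * ‖1 - ζ⁻¹ * z‖ * ‖1 - ζ⁻¹ * z⁻¹‖ / √2 := by
  have hz₀ : z ≠ 0 := norm_ne_zero_iff.1 (hz ▸ one_ne_zero)
  have hre : (2 * z.re : ℂ) = z + z⁻¹ := by
    rw [Complex.inv_eq_conj hz, Complex.add_conj, Complex.ofReal_mul, Complex.ofReal_ofNat]
  have factor : ((√2 * (y - √2 * z.re) : ℝ) : ℂ) =
      ζ * (1 - ζ⁻¹ * z) * (1 - ζ⁻¹ * z⁻¹) := by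
    have hsq : (√2 : ℂ) ^ 2 = 2 := by exact_mod_cast sq_sqrt (zero_le_two (α := ℝ))
    push_cast
    calc (√2 : ℂ) * (y - √2 * z.re) = √2 * y - 2 * z.re := by linear_combination -z.re * hsq
      _ = ζ + ζ⁻¹ - (z + z⁻¹) := by rw [hy, hre]
      _ = _ := by field_simp; ring
  rw [← norm_mul, ← norm_mul, ← factor, Complex.norm_real, norm_mul, norm_of_nonneg (by positivity),
    norm_eq_abs]
  field_simp

theorem log_abs_sub_sqrt_two_mul_re {y : ℝ} {ζ z : ℂ} (hζ : ζ ≠ 0)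
    (hy : √2 * y = ζ + ζ⁻¹) (hz : ‖z‖ = 1) (h₁ : ζ⁻¹ * z ≠ 1) (h₂ : ζ⁻¹ * z⁻¹ ≠ 1) :
    log |y - √2 * z.re| =
      (log ‖ζ‖ - log 2 / 2) + log ‖1 - ζ⁻¹ * z‖ + log ‖1 - ζ⁻¹ * z⁻¹‖ := by
  have h₀ : ‖ζ‖ ≠ 0 := norm_ne_zero_iff.2 hζ
  have h₁ : ‖1 - ζ⁻¹ * z‖ ≠ 0 := norm_ne_zero_iff.2 (sub_ne_zero.2 h₁.symm)
  have h₂ : ‖1 - ζ⁻¹ * z⁻¹‖ ≠ 0 := norm_ne_zero_iff.2 (sub_ne_zero.2 h₂.symm)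
  rw [abs_sub_sqrt_two_mul_re hζ hy hz, log_div (by positivity) (by positivity),
    log_mul (by positivity) h₂, log_mul h₀ h₁, log_sqrt zero_le_two]
  ring

theorem circleAverage_re_pow {n : ℕ} (hn : n ≠ 0) :
    circleAverage (fun z ↦ (z ^ n).re) 0 1 = 0 := by
  simpa [iteratedDeriv_const, hn] using circleAverage_re_pow_mul_re (diffContOnCl_const (c := 1)) hn

theorem circleAverage_one_sub_re_sq_mul_const (a : ℝ) :
    circleAverage (fun z ↦ (1 - (z ^ 2).re) * a) 0 1 = a := by
  have hint : CircleIntegrable (fun z ↦ (z ^ 2).re) 0 1 :=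
    ContinuousOn.circleIntegrable zero_le_one (by fun_prop)
  have hcomm : (fun z : ℂ ↦ (1 - (z ^ 2).re) * a) = fun z ↦ a • (1 - (z ^ 2).re) := by
    simp only [smul_eq_mul, mul_comm]
  rw [hcomm, circleAverage_fun_smul, circleAverage_fun_sub (circleIntegrable_const 1 0 1) hint,
    circleAverage_const, circleAverage_re_pow two_ne_zero, sub_zero, smul_eq_mul, mul_one]

theorem circleAverage_one_sub_re_sq_mul_log_norm_inv {w : ℂ} (hw : ‖w‖ ≤ 1) :
    circleAverage (fun z ↦ (1 - (z ^ 2).re) * log ‖1 - w * z⁻¹‖) 0 1 = (w ^ 2).re / 4 := by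
  rw [← circleAverage_one_sub_re_sq_mul_log_norm hw, ← circleAverage_zero_one_congr_inv]
  refine circleAverage_congr_sphere fun z hz ↦ ?_
  have : (z⁻¹ ^ 2).re = (z ^ 2).re := by
    rw [Complex.inv_eq_conj (by simpa using hz), ← map_pow, Complex.conj_re]
  simp only [this, inv_inv]

theorem PsiStar_eq_circleAverage {y : ℝ} {ζ : ℂ} (hζ : ζ ≠ 0) (hy : √2 * y = ζ + ζ⁻¹) :
    PsiStar y = circleAverage (fun z ↦ (1 - (z ^ 2).re) * (log ‖ζ‖ - log 2 / 2) +
      (1 - (z ^ 2).re) * log ‖1 - ζ⁻¹ * z‖ + (1 - (z ^ 2).re) * log ‖1 - ζ⁻¹ * z⁻¹‖) 0 1 := by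
  rw [PsiStar, integral_sigmaSc]
  unfold circleAverage
  congr 1
  apply intervalIntegral.integral_congr_ae
  filter_upwards [ae_mul_circleMap_ne_one ζ⁻¹, ae_mul_circleMap_ne_one ζ] with θ h₁ h₂ _
  have h₂ : ζ⁻¹ * (circleMap 0 1 θ)⁻¹ ≠ 1 := by rwa [← mul_inv, ne_eq, inv_eq_one]
  rw [log_abs_sub_sqrt_two_mul_re hζ hy (by simp) h₁ h₂]
  ring

theorem PsiStar_eq_of_joukowski {y : ℝ} {ζ : ℂ} (hζ : 1 ≤ ‖ζ‖) (hy : √2 * y = ζ + ζ⁻¹) :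
    PsiStar y = log ‖ζ‖ + (ζ⁻¹ ^ 2).re / 2 - log 2 / 2 := by
  have hw : ‖ζ⁻¹‖ ≤ 1 := norm_inv ζ ▸ inv_le_one_of_one_le₀ hζ
  have h₀ : CircleIntegrable (fun z ↦ (1 - (z ^ 2).re) * (log ‖ζ‖ - log 2 / 2)) 0 1 :=
    ContinuousOn.circleIntegrable zero_le_one (by fun_prop)
  have h₁ : CircleIntegrable (fun z ↦ (1 - (z ^ 2).re) * log ‖1 - ζ⁻¹ * z‖) 0 1 :=
    (circleIntegrable_log_norm_one_sub_mul ζ⁻¹ 0 1).fun_continuousOn_mul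
      (g := fun z ↦ 1 - (z ^ 2).re) (by fun_prop)
  have h₂ : CircleIntegrable (fun z ↦ (1 - (z ^ 2).re) * log ‖1 - ζ⁻¹ * z⁻¹‖) 0 1 :=
    (MeromorphicOn.circleIntegrable_log_norm (f := fun z ↦ 1 - ζ⁻¹ * z⁻¹)
      fun _ _ ↦ by fun_prop).fun_continuousOn_mul (g := fun z ↦ 1 - (z ^ 2).re) (by fun_prop)
  rw [PsiStar_eq_circleAverage (norm_pos_iff.1 (zero_lt_one.trans_le hζ)) hy,
    circleAverage_fun_add (h₀.fun_add h₁) h₂, circleAverage_fun_add h₀ h₁,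
    circleAverage_one_sub_re_sq_mul_const, circleAverage_one_sub_re_sq_mul_log_norm hw,
    circleAverage_one_sub_re_sq_mul_log_norm_inv hw]
  ring

theorem PsiStar_of_abs_le_sqrt_two {y : ℝ} (hy : |y| ≤ √2) :
    PsiStar y = y ^ 2 / 2 - 1 / 2 - log 2 / 2 := by
  have hsq : √2 ^ 2 = 2 := sq_sqrt zero_le_two
  obtain ⟨hl, hu⟩ := abs_le.1 hy
  let ζ : ℂ := Complex.exp (arccos (y / √2) * Complex.I)
  have hnorm : ‖ζ‖ = 1 := Complex.norm_exp_ofReal_mul_I _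
  have hre : ζ.re = y / √2 := by
    rw [Complex.exp_ofReal_mul_I_re, cos_arccos]
    · rwa [le_div_iff₀ (by positivity), neg_one_mul]
    · rwa [div_le_one (by positivity)]
  have hy : (√2 * y : ℂ) = ζ + ζ⁻¹ := by
    rw [Complex.inv_eq_conj hnorm, Complex.add_conj, hre]
    norm_cast
    field_simp
    rw [hsq, mul_comm]
  have hinv : (ζ⁻¹ ^ 2).re = (ζ ^ 2).re := by
    rw [Complex.inv_eq_conj hnorm, ← map_pow, Complex.conj_re]
  have hweight := one_sub_re_sq_of_mem_sphere (mem_sphere_zero_iff_norm.2 hnorm)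
  rw [hre, div_pow, hsq] at hweight
  rw [PsiStar_eq_of_joukowski hnorm.ge hy, hnorm, log_one, hinv]
  linarith

theorem PsiStar_eq_of_real_joukowski {y ρ : ℝ} (hρ : 1 ≤ |ρ|) (hy : √2 * y = ρ + ρ⁻¹) :
    PsiStar y = log |ρ| + ρ⁻¹ ^ 2 / 2 - log 2 / 2 := by
  have h := PsiStar_eq_of_joukowski (y := y) (ζ := ρ) (by simpa using hρ) (by exact_mod_cast hy)
  have hre : ((ρ : ℂ)⁻¹ ^ 2).re = ρ⁻¹ ^ 2 := by norm_cast
  rwa [Complex.norm_real, norm_eq_abs, hre] at h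

/-! ### Maximisation -/

theorem exists_one_le_add_inv_eq {x : ℝ} (hx : 2 ≤ x) : ∃ r, 1 ≤ r ∧ r + r⁻¹ = x := by
  have hx' : 1 ≤ x / 2 := by linarith
  refine ⟨exp (arcosh (x / 2)), one_le_exp (arcosh_nonneg hx'), ?_⟩
  have := cosh_eq (arcosh (x / 2))
  rw [cosh_arcosh hx'] at this
  rw [← exp_neg]
  linarith

theorem log_add_inv_sq_div_two_sub_lt {r s : ℝ} (hr : 1 ≤ r) (hs : 1 ≤ s) (hne : r ≠ s) :
    log r + r⁻¹ ^ 2 / 2 - (s - (r + r⁻¹)) ^ 2 / 2 < log s := by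
  let F (x : ℝ) : ℝ := log x + x⁻¹ ^ 2 / 2 - (s - (x + x⁻¹)) ^ 2 / 2
  have hF {x : ℝ} (hx : 1 ≤ x) : HasDerivAt F ((1 - x⁻¹ ^ 2) * (s - x)) x := by
    have hx₀ : x ≠ 0 := by positivity
    have hinv := hasDerivAt_inv hx₀
    convert! ((hasDerivAt_log hx₀).add ((hinv.pow 2).div_const 2)).sub
      (((((hasDerivAt_id x).add hinv).const_sub s).pow 2).div_const 2) using 1
    simp only [Pi.add_apply, id_eq, Nat.cast_ofNat, Nat.add_one_sub_one, pow_one]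
    field_simp
    ring
  have hsign {x : ℝ} (hx : 1 < x) : 0 < 1 - x⁻¹ ^ 2 :=
    sub_pos.2 (pow_lt_one₀ (by positivity) (inv_lt_one_of_one_lt₀ hx) two_ne_zero)
  have hFs : F s = log s := by simp [F]
  change F r < log s
  rw [← hFs]
  rcases lt_or_gt_of_ne hne with hlt | hlt
  · refine strictMonoOn_of_deriv_pos (convex_Icc 1 s)
      (fun x hx ↦ (hF hx.1).continuousAt.continuousWithinAt) (fun x hx ↦ ?_)
      ⟨hr, hlt.le⟩ ⟨hs, le_rfl⟩ hlt
    rw [interior_Icc] at hx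
    rw [(hF hx.1.le).deriv]
    exact mul_pos (hsign hx.1) (sub_pos.2 hx.2)
  · refine strictAntiOn_of_deriv_neg (convex_Ici s)
      (fun x hx ↦ (hF (hs.trans hx)).continuousAt.continuousWithinAt) (fun x hx ↦ ?_)
      Set.self_mem_Ici hlt.le hlt
    rw [interior_Ici] at hx
    have hx₁ : 1 < x := hs.trans_lt hx
    rw [(hF hx₁.le).deriv]
    exact mul_neg_of_pos_of_neg (hsign hx₁) (sub_neg.2 hx)

theorem log_add_inv_sq_div_two_sub_le {r s : ℝ} (hr : 1 ≤ r) (hs : 1 ≤ s) :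
    log r + r⁻¹ ^ 2 / 2 - (s - (r + r⁻¹)) ^ 2 / 2 ≤ log s := by
  rcases eq_or_ne r s with rfl | hne
  · simp
  · exact (log_add_inv_sq_div_two_sub_lt hr hs hne).le

theorem sq_add_div_sqrt_two (y s : ℝ) : (y + s / √2) ^ 2 = (s + √2 * y) ^ 2 / 2 := by
  have hsq : √2 ^ 2 = 2 := sq_sqrt zero_le_two
  field_simp
  rw [hsq]
  ring

theorem PsiStar_sub_sq_eq {s y : ℝ} (hs : 1 ≤ s) (hy : √2 * y = -(s + s⁻¹)) :
    PsiStar y - (y + s / √2) ^ 2 = log s - log 2 / 2 := by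
  have habs : |-s| = s := by rw [abs_neg, abs_of_pos (by positivity)]
  rw [PsiStar_eq_of_real_joukowski (ρ := -s) (habs.symm ▸ hs) (by rw [hy, inv_neg, neg_add]),
    sq_add_div_sqrt_two, habs, hy, inv_neg]
  ring

theorem PsiStar_sub_sq_lt_of_abs_lt {s y : ℝ} (hs : 1 ≤ s) (hy : |√2 * y| < 2) :
    PsiStar y - (y + s / √2) ^ 2 < log s - log 2 / 2 := by
  have hsq : √2 ^ 2 = 2 := sq_sqrt zero_le_two
  have hle : |y| ≤ √2 := by
    rw [abs_mul, abs_of_nonneg (sqrt_nonneg 2)] at hy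
    nlinarith [sqrt_nonneg 2]
  have hvalue : y ^ 2 / 2 = (√2 * y) ^ 2 / 4 := by rw [mul_pow, hsq]; ring
  have hend : 1 / 2 - (s - 2) ^ 2 / 2 ≤ log s := by
    convert! log_add_inv_sq_div_two_sub_le le_rfl hs using 1
    rw [log_one]
    norm_num
  have hl := (abs_lt.1 hy).1
  have hgap : 0 < (√2 * y + 2) * (s - (2 - √2 * y) / 4) :=
    mul_pos (by linarith) (by linarith)
  rw [PsiStar_of_abs_le_sqrt_two hle, sq_add_div_sqrt_two, hvalue]
  linear_combination hend + hgap

theorem PsiStar_sub_sq_lt_of_le_abs {s y : ℝ} (hs : 1 ≤ s) (hy : 2 ≤ |√2 * y|)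
    (hne : √2 * y ≠ -(s + s⁻¹)) :
    PsiStar y - (y + s / √2) ^ 2 < log s - log 2 / 2 := by
  obtain ⟨r, hr, hry⟩ := exists_one_le_add_inv_eq hy
  have hinv : 0 < r⁻¹ := by positivity
  rw [sq_add_div_sqrt_two]
  rcases abs_choice (√2 * y) with habs | habs <;> rw [habs] at hry
  · rw [PsiStar_eq_of_real_joukowski (ρ := r) (hr.trans (le_abs_self r)) hry.symm, ← hry,
      abs_of_pos (by positivity)]
    have hreflect : (s - (r + r⁻¹)) ^ 2 < (s + (r + r⁻¹)) ^ 2 :=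
      sq_lt_sq' (by linarith) (by linarith)
    linear_combination log_add_inv_sq_div_two_sub_le hr hs + hreflect / 2
  · have hne' : r ≠ s := by
      rintro rfl
      exact hne (by linarith)
    have hy' : √2 * y = -r + (-r)⁻¹ := by
      rw [inv_neg]
      linarith
    rw [PsiStar_eq_of_real_joukowski (by rw [abs_neg]; exact hr.trans (le_abs_self r)) hy', hy',
      abs_neg, abs_of_pos (by positivity), inv_neg]
    linear_combination log_add_inv_sq_div_two_sub_lt hr hs hne'

theorem PsiStar_sub_sq_lt {s y : ℝ} (hs : 1 ≤ s) (hne : √2 * y ≠ -(s + s⁻¹)) :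
    PsiStar y - (y + s / √2) ^ 2 < log s - log 2 / 2 := by
  rcases lt_or_ge |√2 * y| 2 with hlt | hge
  · exact PsiStar_sub_sq_lt_of_abs_lt hs hlt
  · exact PsiStar_sub_sq_lt_of_le_abs hs hge hne

theorem PsiStar_sub_sq_le {s : ℝ} (hs : 1 ≤ s) (y : ℝ) :
    PsiStar y - (y + s / √2) ^ 2 ≤ log s - log 2 / 2 := by
  by_cases hy : √2 * y = -(s + s⁻¹)
  · exact (PsiStar_sub_sq_eq hs hy).le
  · exact (PsiStar_sub_sq_lt hs hy).le

theorem PsiStar_sub_sq_eq_iff {s y : ℝ} (hs : 1 ≤ s) :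
    PsiStar y - (y + s / √2) ^ 2 = log s - log 2 / 2 ↔ √2 * y = -(s + s⁻¹) :=
  ⟨fun h ↦ by_contra fun hy ↦ (PsiStar_sub_sq_lt hs hy).ne h, PsiStar_sub_sq_eq hs⟩

theorem log_sub_mul_sq_div_two_le {a x : ℝ} (ha : 0 < a) (hx : 0 < x) :
    log x - a * x ^ 2 / 2 ≤ -(1 + log a) / 2 := by
  have h := log_le_sub_one_of_pos (by positivity : 0 < a * x ^ 2)
  rw [log_mul ha.ne' (by positivity), log_pow] at h
  push_cast at h
  linarith

theorem log_sub_mul_sq_div_two_eq_iff {a x : ℝ} (ha : 0 < a) (hx : 0 < x) :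
    log x - a * x ^ 2 / 2 = -(1 + log a) / 2 ↔ a * x ^ 2 = 1 := by
  have hlog : log (a * x ^ 2) = log a + 2 * log x := by
    rw [log_mul ha.ne' (by positivity), log_pow, Nat.cast_ofNat]
  refine ⟨fun h ↦ ?_, fun h ↦ ?_⟩
  · by_contra hne
    have := log_lt_sub_one_of_pos (by positivity) hne
    linarith
  · rw [h, log_one] at hlog
    linarith

theorem complete_square {B B' C t : ℝ} (hB : B ≠ 0) (hD : B * C - B' ^ 2 ≠ 0)
    (ht : 2 * C * t ^ 2 = 1) (a v : ℝ) :
    v ^ 2 / (2 * B) + B * C / (B * C - B' ^ 2) * (a + B' / B * v * t) ^ 2 =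
      a ^ 2 + C / (2 * (B * C - B' ^ 2)) * (v + 2 * B' * a * t) ^ 2 := by
  field_simp
  linear_combination (B' ^ 2 * v ^ 2 - 2 * B * B' ^ 2 * a ^ 2) * ht

/-- The maximiser of `u ↦ ψ(ρ,u,y)`, which is a concave quadratic function of `u`. -/
noncomputable def argmaxU (B' B'' μ ρ y : ℝ) : ℝ :=
  μ * ρ ^ 2 / 2 - 2 * B' * (√2 * y + μ / √(4 * B'')) / √(4 * B'')

theorem psiSRC_eq {B B' B'' : ℝ} (hB : B ≠ 0) (hB'' : 0 < B'') (hD : B * B'' - B' ^ 2 ≠ 0)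
    (μ ρ u y : ℝ) :
    psiSRC B B' B'' μ ρ u y =
      (PsiStar y - (y + μ / √(4 * B'') / √2) ^ 2) +
      (log ρ - μ ^ 2 / (-2 * B') * ρ ^ 2 / 2) -
      B'' / (2 * (B * B'' - B' ^ 2)) * (u - argmaxU B' B'' μ ρ y) ^ 2 := by
  have hsq : √2 ^ 2 = 2 := sq_sqrt zero_le_two
  have ht : 2 * B'' * (√2 / √(4 * B'')) ^ 2 = 1 := by
    rw [div_pow, hsq, sq_sqrt (by positivity)]
    field_simp
    norm_num
  have h8 : √(8 * B'') = √(4 * B'') * √2 := by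
    rw [← sqrt_mul (by positivity)]
    ring_nf
  have outer : y + (μ + 2 * B' / B * (u - μ * ρ ^ 2 / 2)) / √(8 * B'') =
      y + μ / √(4 * B'') / √2 + B' / B * (u - μ * ρ ^ 2 / 2) * (√2 / √(4 * B'')) := by
    rw [h8]
    field_simp
    linear_combination -B' * (2 * u - μ * ρ ^ 2) * hsq
  have residual : u - argmaxU B' B'' μ ρ y = u - μ * ρ ^ 2 / 2 +
      2 * B' * (y + μ / √(4 * B'') / √2) * (√2 / √(4 * B'')) := by
    rw [argmaxU]
    field_simp
    ring
  rw [psiSRC, outer, residual]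
  linear_combination -complete_square hB hD ht (y + μ / √(4 * B'') / √2) (u - μ * ρ ^ 2 / 2)

theorem argmaxU_eq {B' B'' μ ρ y : ℝ} (hB' : B' ≠ 0) (hB'' : 0 < B'') (hμ : μ ≠ 0)
    (hρ : μ ^ 2 / (-2 * B') * ρ ^ 2 = 1)
    (hy : √2 * y = -(μ / √(4 * B'') + (μ / √(4 * B''))⁻¹)) :
    argmaxU B' B'' μ ρ y = B' / μ := by
  have hρ' : μ * ρ ^ 2 = -2 * B' / μ := by
    field_simp at hρ ⊢
    linarith
  have hκ : √(4 * B'') ≠ 0 := by positivity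
  rw [argmaxU, hρ', hy, inv_div]
  field_simp
  ring

theorem sqrt_two_mul_eq_iff {y a : ℝ} : √2 * y = -a ↔ y = -(1 / √2) * a := by
  rw [mul_comm, ← eq_div_iff (by positivity)]
  ring_nf

theorem div_mul_sq_eq_one_iff {b μ ρ : ℝ} (hb : 0 < b) (hμ : 0 < μ) (hρ : 0 < ρ) :
    μ ^ 2 / b * ρ ^ 2 = 1 ↔ ρ = √b / μ := by
  rw [div_mul_eq_mul_div, div_eq_one_iff_eq hb.ne', ← mul_pow, eq_div_iff hμ.ne', mul_comm ρ,
    eq_comm, ← sqrt_eq_iff_eq_sq hb.le (by positivity), eq_comm]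

section Maximum

variable {B B' B'' μ ρ u y : ℝ}

theorem psiSRC_le (hB' : B' < 0) (hB'' : 0 < B'') (hCS : 0 < B * B'' - B' ^ 2)
    (hμ : √(4 * B'') ≤ μ) (hρ : 0 < ρ) :
    psiSRC B B' B'' μ ρ u y ≤
      log (μ / √(4 * B'')) - log 2 / 2 + -(1 + log (μ ^ 2 / (-2 * B'))) / 2 := by
  have hB : B ≠ 0 := by rintro rfl; nlinarith
  have hb : 0 < -2 * B' := by linarith
  have hκ : 0 < √(4 * B'') := by positivity
  have hμ₀ : 0 < μ := hκ.trans_le hμ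
  have hy_le := PsiStar_sub_sq_le ((one_le_div hκ).2 hμ) y
  have hρ_le := log_sub_mul_sq_div_two_le (by positivity : 0 < μ ^ 2 / (-2 * B')) hρ
  have hu : 0 ≤ B'' / (2 * (B * B'' - B' ^ 2)) * (u - argmaxU B' B'' μ ρ y) ^ 2 := by positivity
  rw [psiSRC_eq hB hB'' hCS.ne']
  linarith

theorem psiSRC_eq_iff (hB' : B' < 0) (hB'' : 0 < B'') (hCS : 0 < B * B'' - B' ^ 2)
    (hμ : √(4 * B'') ≤ μ) (hρ : 0 < ρ) :
    psiSRC B B' B'' μ ρ u y =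
        log (μ / √(4 * B'')) - log 2 / 2 + -(1 + log (μ ^ 2 / (-2 * B'))) / 2 ↔
      ρ = √(-2 * B') / μ ∧ u = B' / μ ∧ y = -(1 / √2) * (μ / √(4 * B'') + √(4 * B'') / μ) := by
  have hB : B ≠ 0 := by rintro rfl; nlinarith
  have hb : 0 < -2 * B' := by linarith
  have hκ : 0 < √(4 * B'') := by positivity
  have hμ₀ : 0 < μ := hκ.trans_le hμ
  have hs : 1 ≤ μ / √(4 * B'') := (one_le_div hκ).2 hμ
  have ha : 0 < μ ^ 2 / (-2 * B') := by positivity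
  have hc : 0 < B'' / (2 * (B * B'' - B' ^ 2)) := by positivity
  rw [psiSRC_eq hB hB'' hCS.ne', ← div_mul_sq_eq_one_iff hb hμ₀ hρ, ← inv_div μ √(4 * B''),
    ← sqrt_two_mul_eq_iff]
  refine ⟨fun h ↦ ?_, fun ⟨hρ', hu', hy'⟩ ↦ ?_⟩
  · have hy_le := PsiStar_sub_sq_le hs y
    have hρ_le := log_sub_mul_sq_div_two_le ha hρ
    have hu := mul_nonneg hc.le (sq_nonneg (u - argmaxU B' B'' μ ρ y))
    have hy' := (PsiStar_sub_sq_eq_iff (y := y) hs).1 (by linarith)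
    have hρ' := (log_sub_mul_sq_div_two_eq_iff ha hρ).1 (by linarith)
    have hu' := (mul_eq_zero_iff_left hc.ne').1 (hu.antisymm' (by linarith))
    rw [argmaxU_eq hB'.ne hB'' hμ₀.ne' hρ' hy', sq_eq_zero_iff, sub_eq_zero] at hu'
    exact ⟨hρ', hu', hy'⟩
  · rw [argmaxU_eq hB'.ne hB'' hμ₀.ne' hρ' hy', (PsiStar_sub_sq_eq_iff hs).2 hy',
      (log_sub_mul_sq_div_two_eq_iff ha hρ).2 hρ', hu']
    ring

end Maximum

theorem psiSRC_max_general (B B' B'' μ : ℝ)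
    (hB' : B' < 0) (hB'' : 0 < B'')
    (hCS : 0 < B * B'' - B' ^ 2) (hμ : Real.sqrt (4 * B'') ≤ μ) :
    (∀ ρ ∈ Set.Ioi (0 : ℝ), ∀ u y : ℝ,
      psiSRC B B' B'' μ ρ u y ≤
        psiSRC B B' B'' μ (Real.sqrt (-2 * B') / μ) (B' / μ)
          (-(1 / Real.sqrt 2) * (μ / Real.sqrt (4 * B'') + Real.sqrt (4 * B'') / μ))) ∧
    (∀ ρ ∈ Set.Ioi (0 : ℝ), ∀ u y : ℝ,
      psiSRC B B' B'' μ ρ u y =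
        psiSRC B B' B'' μ (Real.sqrt (-2 * B') / μ) (B' / μ)
          (-(1 / Real.sqrt 2) * (μ / Real.sqrt (4 * B'') + Real.sqrt (4 * B'') / μ)) →
        ρ = Real.sqrt (-2 * B') / μ ∧ u = B' / μ ∧
          y = -(1 / Real.sqrt 2) * (μ / Real.sqrt (4 * B'') + Real.sqrt (4 * B'') / μ)) ∧
    psiSRC B B' B'' μ (Real.sqrt (-2 * B') / μ) (B' / μ)
        (-(1 / Real.sqrt 2) * (μ / Real.sqrt (4 * B'') + Real.sqrt (4 * B'') / μ)) =
      -Real.log (Real.sqrt (4 * B'')) + (1 / 2) * Real.log (-2 * B') - 1 / 2 -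
        (1 / 2) * Real.log 2 := by
  have hb : 0 < -2 * B' := by linarith
  have hκ : 0 < √(4 * B'') := by positivity
  have hμ₀ : 0 < μ := hκ.trans_le hμ
  have hmax := (psiSRC_eq_iff hB' hB'' hCS hμ (div_pos (sqrt_pos.2 hb) hμ₀)).2 ⟨rfl, rfl, rfl⟩
  refine ⟨fun ρ hρ u y ↦ ?_, fun ρ hρ u y h ↦ ?_, ?_⟩
  · exact hmax ▸ psiSRC_le hB' hB'' hCS hμ hρ
  · exact (psiSRC_eq_iff hB' hB'' hCS hμ hρ).1 (h.trans hmax)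
  · rw [hmax, log_div hμ₀.ne' hκ.ne', log_div (by positivity) hb.ne', log_pow, Nat.cast_ofNat]
    ring

/-- The SRC complexity function attains its unique maximum on `(0,∞) × ℝ × ℝ`
at `(ρ*, u*, y*)`, with the stated maximum value. -/
theorem psiSRC_max (B B' B'' μ : ℝ)
    (hB : 0 < B) (hB' : B' < 0) (hB'' : 0 < B'')
    (hCS : 0 < B * B'' - B' ^ 2) (hμ : Real.sqrt (4 * B'') < μ) :
    (∀ ρ ∈ Set.Ioi (0 : ℝ), ∀ u y : ℝ,
      psiSRC B B' B'' μ ρ u y ≤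
        psiSRC B B' B'' μ (Real.sqrt (-2 * B') / μ) (B' / μ)
          (-(1 / Real.sqrt 2) * (μ / Real.sqrt (4 * B'') + Real.sqrt (4 * B'') / μ))) ∧
    (∀ ρ ∈ Set.Ioi (0 : ℝ), ∀ u y : ℝ,
      psiSRC B B' B'' μ ρ u y =
        psiSRC B B' B'' μ (Real.sqrt (-2 * B') / μ) (B' / μ)
          (-(1 / Real.sqrt 2) * (μ / Real.sqrt (4 * B'') + Real.sqrt (4 * B'') / μ)) →
        ρ = Real.sqrt (-2 * B') / μ ∧ u = B' / μ ∧
          y = -(1 / Real.sqrt 2) * (μ / Real.sqrt (4 * B'') + Real.sqrt (4 * B'') / μ)) ∧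
    psiSRC B B' B'' μ (Real.sqrt (-2 * B') / μ) (B' / μ)
        (-(1 / Real.sqrt 2) * (μ / Real.sqrt (4 * B'') + Real.sqrt (4 * B'') / μ)) =
      -Real.log (Real.sqrt (4 * B'')) + (1 / 2) * Real.log (-2 * B') - 1 / 2 -
        (1 / 2) * Real.log 2 :=
  psiSRC_max_general B B' B'' μ hB' hB'' hCS hμ.le
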